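/- For every ρ ∈ [1/3, 1) there exists a function V : ℝ → ℝ that is twice continuously differentiable, bounded below on ℝ, and satisfies (1/2)·V''(x) − |V'(x)| + c(x) = ρ for all x ∈ ℝ. -/

import Mathlib

/-!
Writing `p = V'`, the equation is `p' = 2|p| + 2(ρ - 1) + 2e^{-|x|}`. Look for an odd `p` that is
nonnegative on `[0, ∞)`. There the equation is linear, and its solution with `p(0) = 0` is
`p(x) = (1 - ρ) - (2/3) e^{-x} + (ρ - 1/3) e^{2x}`, which is increasing because `ρ ≥ 1/3`,
hence indeed nonnegative. Its odd extension has the continuous even derivative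
`(2/3) e^{-|x|} + 2(ρ - 1/3) e^{2|x|}`, so `V(x) = ∫₀ˣ p` is `C²`, solves the equation,
and is nonnegative.
To avoid gluing at the origin, `p` is defined as the integral of its derivative.
-/

open MeasureTheory Real

/-- The running cost `c(x) = 1 - e^{-|x|}`. -/
noncomputable def runCost (x : ℝ) : ℝ := 1 - Real.exp (-|x|)

/-- The second derivative `V''` of the solution. -/
noncomputable def hjbSecond (ρ x : ℝ) : ℝ :=
  2 / 3 * Real.exp (-|x|) + 2 * (ρ - 1 / 3) * Real.exp (2 * |x|)

/-- The first derivative `V'` of the solution, normalised to vanish at `0`. -/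
noncomputable def hjbFirst (ρ x : ℝ) : ℝ := ∫ t in (0 : ℝ)..x, hjbSecond ρ t

/-- The closed form of `V'` on the half-line `[0, ∞)`. -/
noncomputable def hjbHalf (ρ x : ℝ) : ℝ :=
  (1 - ρ) - 2 / 3 * Real.exp (-x) + (ρ - 1 / 3) * Real.exp (2 * x)

lemma continuous_hjbSecond (ρ : ℝ) : Continuous (hjbSecond ρ) := by
  unfold hjbSecond
  fun_prop

lemma hasDerivAt_hjbFirst (ρ x : ℝ) : HasDerivAt (hjbFirst ρ) (hjbSecond ρ x) x :=
  (continuous_hjbSecond ρ).integral_hasStrictDerivAt 0 x |>.hasDerivAt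

lemma continuous_hjbFirst (ρ : ℝ) : Continuous (hjbFirst ρ) :=
  continuous_iff_continuousAt.2 fun x => (hasDerivAt_hjbFirst ρ x).continuousAt

lemma hjbFirst_of_nonneg (ρ : ℝ) {x : ℝ} (hx : 0 ≤ x) : hjbFirst ρ x = hjbHalf ρ x := by
  have h0 : hjbHalf ρ 0 = 0 := by
    simp only [hjbHalf, neg_zero, mul_zero, Real.exp_zero]
    ring
  have h : hjbFirst ρ x = hjbHalf ρ x - hjbHalf ρ 0 := by
    refine intervalIntegral.integral_eq_sub_of_hasDerivAt (fun t ht => ?_)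
      ((continuous_hjbSecond ρ).intervalIntegrable _ _)
    rw [Set.uIcc_of_le hx] at ht
    have h1 : HasDerivAt (fun t : ℝ => Real.exp (-t)) (Real.exp (-t) * -1) t :=
      (hasDerivAt_neg t).exp
    have h2 : HasDerivAt (fun t : ℝ => Real.exp (2 * t)) (Real.exp (2 * t) * (2 * 1)) t :=
      ((hasDerivAt_id t).const_mul 2).exp
    have h3 := ((h1.const_mul (2 / 3)).const_sub (1 - ρ)).add (h2.const_mul (ρ - 1 / 3))
    refine h3.congr_deriv ?_
    rw [hjbSecond, abs_of_nonneg ht.1]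
    ring
  rw [h, h0, sub_zero]

lemma hjbFirst_neg (ρ x : ℝ) : hjbFirst ρ (-x) = -hjbFirst ρ x := by
  have h : (fun t => hjbSecond ρ (-t)) = hjbSecond ρ := by
    funext t
    simp [hjbSecond]
  have h2 := intervalIntegral.integral_comp_neg (a := 0) (b := x) (hjbSecond ρ)
  rw [h, neg_zero] at h2
  rw [hjbFirst, hjbFirst, h2, intervalIntegral.integral_symm]

lemma hjbFirst_nonneg {ρ : ℝ} (hρ : 1 / 3 ≤ ρ) {x : ℝ} (hx : 0 ≤ x) : 0 ≤ hjbFirst ρ x := by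
  refine intervalIntegral.integral_nonneg hx fun t _ => ?_
  have : 0 ≤ ρ - 1 / 3 := sub_nonneg.2 hρ
  unfold hjbSecond
  positivity

lemma abs_hjbFirst {ρ : ℝ} (hρ : 1 / 3 ≤ ρ) (x : ℝ) : |hjbFirst ρ x| = hjbHalf ρ |x| := by
  rcases le_total 0 x with hx | hx
  · rw [abs_of_nonneg hx, abs_of_nonneg (hjbFirst_nonneg hρ hx), hjbFirst_of_nonneg ρ hx]
  · have hx' : 0 ≤ -x := neg_nonneg.2 hx
    rw [abs_of_nonpos hx, ← hjbFirst_of_nonneg ρ hx', ← abs_of_nonneg (hjbFirst_nonneg hρ hx'),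
      hjbFirst_neg, abs_neg]

/-- For every `ρ ∈ [1/3, 1)` there exists a function `V : ℝ → ℝ` that is twice
continuously differentiable, bounded below on `ℝ`, and satisfies the ergodic HJB
equation `(1/2) V''(x) - |V'(x)| + c(x) = ρ` for all `x ∈ ℝ`. -/
theorem hjb_solution_exists (ρ : ℝ) (hρ : ρ ∈ Set.Ico (1 / 3 : ℝ) 1) :
    ∃ V : ℝ → ℝ, ContDiff ℝ 2 V ∧ BddBelow (Set.range V) ∧
      ∀ x : ℝ, (1 / 2) * deriv (deriv V) x - |deriv V x| + runCost x = ρ := by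
  have hV : ∀ x, HasDerivAt (fun x => ∫ t in (0 : ℝ)..x, hjbFirst ρ t) (hjbFirst ρ x) x :=
    fun x => ((continuous_hjbFirst ρ).integral_hasStrictDerivAt 0 x).hasDerivAt
  have hd : deriv (fun x => ∫ t in (0 : ℝ)..x, hjbFirst ρ t) = hjbFirst ρ :=
    funext fun x => (hV x).deriv
  have hd2 : deriv (hjbFirst ρ) = hjbSecond ρ := funext fun x => (hasDerivAt_hjbFirst ρ x).deriv
  refine ⟨fun x => ∫ t in (0 : ℝ)..x, hjbFirst ρ t, ?_, ⟨0, ?_⟩, fun x => ?_⟩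
  · have h1 : ContDiff ℝ 1 (hjbFirst ρ) := by
      rw [contDiff_one_iff_deriv, hd2]
      exact ⟨fun x => (hasDerivAt_hjbFirst ρ x).differentiableAt, continuous_hjbSecond ρ⟩
    rw [show (2 : WithTop ℕ∞) = 1 + 1 from one_add_one_eq_two.symm, contDiff_succ_iff_deriv, hd]
    exact ⟨fun x => (hV x).differentiableAt, by simp, h1⟩
  · rintro _ ⟨x, rfl⟩
    rcases le_total 0 x with hx | hx
    · exact intervalIntegral.integral_nonneg hx fun t ht => hjbFirst_nonneg hρ.1 ht.1
    · have h := intervalIntegral.integral_nonneg (μ := volume) (f := fun t => -hjbFirst ρ t) hx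
        fun t ht => by
          rw [← hjbFirst_neg]
          exact hjbFirst_nonneg hρ.1 (neg_nonneg.2 ht.2)
      rw [intervalIntegral.integral_neg, ← intervalIntegral.integral_symm] at h
      exact h
  · rw [hd, hd2, abs_hjbFirst hρ.1, hjbSecond, hjbHalf, runCost]
    ring
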